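/- Kneser's Theorem: Let m be a positive integer and let A, B ⊆ ℤ_m be non-empty finite sets. Then |A+B| ≥ min(|A| + |B| - |Sym(A+B)|, m). -/

import Mathlib

open Pointwise

/-- The symmetry group of a set `A ⊆ ℤ_m`: all `h` with `A + {h} = A`. -/
def symGroup {m : ℕ} [NeZero m] (A : Finset (ZMod m)) : Finset (ZMod m) :=
  Finset.univ.filter (fun h => A + {h} = A)

/-!
Write `H(C)` for the stabilizer of a finite set `C`. The proof rests on two facts.

* If `a ∈ A` and `b ∈ B`, then some `C ⊆ A + B` containing `a + b` has
  `|A| + |B| ≤ |C| + |H(C)|`. Dyson transforms `(A, B) ↦ (A ∪ (e + B), B ∩ (A - e))` with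
  `e ∈ A - b` keep `a ∈ A`, `b ∈ B` and `|A| + |B|`, and do not enlarge `A + B`. When none of them
  shrinks `B` any more, `B - b ⊆ H(A)`, and `C = A + b` works.
* If `n ≤ |C| + |H(C)|` and `n ≤ |D| + |H(D)|`, then `n ≤ |C ∪ D| + |H(C ∪ D)|`. Here
  `H(C ∪ D)` contains `H(C) ∩ H(D)`, and `C \ D` and `D \ C` are estimated inside one coset of
  `H(C) + H(D)`, which is a grid of cosets of `H(C)` and of `H(D)`.

By the second fact, a maximal `C ⊆ A + B` with `|A| + |B| ≤ |C| + |H(C)|` absorbs all the sets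
given by the first, so it is `A + B`.
-/

open AddAction Finset

section AddStab

variable {G : Type*} [AddCommGroup G] [DecidableEq G] {s t : Finset G} {g h x : G}

/-- The stabilizer of a finite set `s` under translation, as a finite set. Restricting to `s - s`
keeps it finite in an infinite group, and makes `addStab ∅` empty rather than everything. -/
def addStab (s : Finset G) : Finset G := {h ∈ s - s | h +ᵥ s = s}

theorem nonempty_of_mem_addStab (hh : h ∈ addStab s) : s.Nonempty :=
  Nonempty.of_sub_left ⟨h, (mem_filter.1 hh).1⟩

theorem mem_addStab (hs : s.Nonempty) : h ∈ addStab s ↔ h ∈ stabilizer G s := by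
  obtain ⟨a, ha⟩ := hs
  refine mem_filter.trans (and_iff_right_of_imp fun hh ↦ ?_)
  exact mem_sub.2 ⟨h + a, (mem_stabilizer_finset.1 hh a).2 ha, a, ha, add_sub_cancel_right h a⟩

theorem card_addStab (hs : s.Nonempty) : #(addStab s) = Nat.card (stabilizer G s) := by
  rw [← Set.ncard_coe_finset, ← Nat.card_coe_set_eq]
  exact Nat.card_congr (Equiv.subtypeEquivRight fun _ ↦ mem_addStab hs)

theorem add_mem_iff_of_mem_addStab (hh : h ∈ addStab s) : x + h ∈ s ↔ x ∈ s := by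
  rw [add_comm]
  exact mem_stabilizer_finset.1 ((mem_addStab (nonempty_of_mem_addStab hh)).1 hh) x

theorem addStab_add_singleton (s : Finset G) (x : G) : addStab (s + {x}) = addStab s := by
  simp only [addStab, add_sub_add_comm, singleton_sub_singleton, sub_self, singleton_zero,
    add_zero, ← vadd_add_assoc, (isAddUnit_singleton x).add_left_inj]

theorem zero_mem_addStab (hs : s.Nonempty) : 0 ∈ addStab s := (mem_addStab hs).2 (zero_mem _)

theorem add_mem_addStab (hg : g ∈ addStab s) (hh : h ∈ addStab s) : g + h ∈ addStab s := by
  rw [mem_addStab (nonempty_of_mem_addStab hg)] at *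
  exact add_mem hg hh

theorem sub_mem_addStab (hg : g ∈ addStab s) (hh : h ∈ addStab s) : g - h ∈ addStab s := by
  rw [mem_addStab (nonempty_of_mem_addStab hg)] at *
  exact sub_mem hg hh

theorem addStab_inter_addStab_subset_addStab_union :
    addStab s ∩ addStab t ⊆ addStab (s ∪ t) := by
  intro h hh
  obtain ⟨hs, ht⟩ := mem_inter.1 hh
  rw [mem_addStab ((nonempty_of_mem_addStab hs).mono subset_union_left), mem_stabilizer_iff,
    vadd_finset_union, (mem_filter.1 hs).2, (mem_filter.1 ht).2]

theorem sub_subset_addStab_of_subset_vadd (ht : t ⊆ x +ᵥ addStab s) : t - t ⊆ addStab s := by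
  refine sub_subset_iff.2 fun y hy z hz ↦ ?_
  obtain ⟨g, hg, rfl⟩ := mem_vadd_finset.1 (ht hy)
  obtain ⟨h, hh, rfl⟩ := mem_vadd_finset.1 (ht hz)
  simpa using sub_mem_addStab hg hh

theorem add_mem_vadd_addStab (hx : x ∈ g +ᵥ addStab s) (hh : h ∈ addStab s) :
    x + h ∈ g +ᵥ addStab s := by
  obtain ⟨y, hy, rfl⟩ := mem_vadd_finset.1 hx
  exact mem_vadd_finset.2 ⟨y + h, add_mem_addStab hy hh, (add_assoc g y h).symm⟩

end AddStab

section Union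

variable {G : Type*} [AddCommGroup G] [DecidableEq G] {C D : Finset G} {x : G}

theorem card_mul_card_le_card_sub_inter_sub_mul_card_add (U V : Finset G) :
    #U * #V ≤ #((U - U) ∩ (V - V)) * #(U + V) := by
  rw [← card_product]
  refine card_le_mul_card_image_of_maps_to (f := fun p : G × G ↦ p.1 + p.2)
    (fun p hp ↦ add_mem_add (mem_product.1 hp).1 (mem_product.1 hp).2) _ fun z hz ↦ ?_
  obtain ⟨u₀, hu₀, v₀, hv₀, rfl⟩ := mem_add.1 hz
  -- A representation `u + v = u₀ + v₀` is determined by `u - u₀ = v₀ - v`.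
  refine card_le_card_of_injOn (fun p ↦ p.1 - u₀) ?_ ?_
  · rintro ⟨u, v⟩ hp
    simp only [coe_filter, mem_product, Set.mem_ofPred_eq] at hp
    obtain ⟨⟨hu, hv⟩, huv⟩ := hp
    have hsub : u - u₀ = v₀ - v := by rw [sub_eq_sub_iff_add_eq_add, huv, add_comm]
    exact mem_inter.2 ⟨sub_mem_sub hu hu₀, mem_sub.2 ⟨v₀, hv₀, v, hv, hsub.symm⟩⟩
  · rintro ⟨u, v⟩ hp ⟨u', v'⟩ hp' huu'
    simp only [coe_filter, mem_product, Set.mem_ofPred_eq] at hp hp'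
    obtain rfl : u = u' := sub_left_injective huu'
    rw [add_left_cancel (hp.2.trans hp'.2.symm)]

theorem card_inter_coset_mul_card_coset_sdiff_le (C D : Finset G) (x : G) :
    #(D ∩ (x +ᵥ addStab C)) * #((x +ᵥ addStab D) \ C) ≤
      #(addStab C ∩ addStab D) * #(D \ C) := by
  have hadd : D ∩ (x +ᵥ addStab C) + ((x +ᵥ addStab D) \ C) ⊆ x +ᵥ (D \ C) := by
    refine add_subset_iff.2 fun u hu v hv ↦ ?_
    obtain ⟨huD, g, hg, rfl⟩ : u ∈ D ∧ ∃ g ∈ addStab C, x + g = u := by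
      simpa only [mem_inter, mem_vadd_finset, vadd_eq_add] using hu
    obtain ⟨⟨h, hh, rfl⟩, hvC⟩ : (∃ h ∈ addStab D, x + h = v) ∧ v ∉ C := by
      simpa only [mem_sdiff, mem_vadd_finset, vadd_eq_add] using hv
    refine mem_vadd_finset.2 ⟨x + g + h, mem_sdiff.2 ⟨?_, ?_⟩, ?_⟩
    · rwa [add_mem_iff_of_mem_addStab hh]
    · rwa [add_right_comm, add_mem_iff_of_mem_addStab hg]
    · rw [vadd_eq_add]
      abel
  calc
    _ ≤ _ := card_mul_card_le_card_sub_inter_sub_mul_card_add _ _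
    _ ≤ #(addStab C ∩ addStab D) * #(x +ᵥ (D \ C)) := by
      gcongr
      exacts [sub_subset_addStab_of_subset_vadd inter_subset_right,
        sub_subset_addStab_of_subset_vadd sdiff_subset]
    _ = _ := by rw [card_vadd_finset]

theorem card_addStab_inter_addStab_le_card_inter_coset (h : (D ∩ (x +ᵥ addStab C)).Nonempty) :
    #(addStab C ∩ addStab D) ≤ #(D ∩ (x +ᵥ addStab C)) := by
  refine (card_le_card_add_left h).trans (card_le_card (add_subset_iff.2 fun y hy k hk ↦ ?_))
  rw [mem_inter] at hy hk ⊢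
  exact ⟨(add_mem_iff_of_mem_addStab hk.2).2 hy.1, add_mem_vadd_addStab hy.2 hk.1⟩

theorem card_addStab_inter_addStab_le_card_coset_sdiff (h : ((x +ᵥ addStab D) \ C).Nonempty) :
    #(addStab C ∩ addStab D) ≤ #((x +ᵥ addStab D) \ C) := by
  refine (card_le_card_add_left h).trans (card_le_card (add_subset_iff.2 fun y hy k hk ↦ ?_))
  rw [mem_inter] at hk
  rw [mem_sdiff] at hy ⊢
  exact ⟨add_mem_vadd_addStab hy.1 hk.2, mt (add_mem_iff_of_mem_addStab hk.1).1 hy.2⟩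

theorem card_inter_coset_add_card_coset_sdiff_le (hD : (D ∩ (x +ᵥ addStab C)).Nonempty)
    (hCD : ((x +ᵥ addStab D) \ C).Nonempty) :
    #(D ∩ (x +ᵥ addStab C)) + #((x +ᵥ addStab D) \ C) ≤
      #(D \ C) + #(addStab C ∩ addStab D) := by
  obtain ⟨g, hg⟩ : (addStab C).Nonempty := vadd_finset_nonempty.1 (hD.mono inter_subset_right)
  have hpos : 0 < #(addStab C ∩ addStab D) := card_pos.2 ⟨0, mem_inter.2
    ⟨zero_mem_addStab (nonempty_of_mem_addStab hg), zero_mem_addStab (hD.mono inter_subset_left)⟩⟩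
  have hmul := card_inter_coset_mul_card_coset_sdiff_le C D x
  obtain ⟨i, hi⟩ := Nat.exists_eq_add_of_le (card_addStab_inter_addStab_le_card_inter_coset hD)
  obtain ⟨j, hj⟩ := Nat.exists_eq_add_of_le (card_addStab_inter_addStab_le_card_coset_sdiff hCD)
  rw [hi, hj] at hmul ⊢
  generalize #(addStab C ∩ addStab D) = k at *
  refine Nat.le_of_mul_le_mul_left ?_ hpos
  calc
    k * (k + i + (k + j)) ≤ (k + i) * (k + j) + k * k := by linarith [Nat.zero_le (i * j)]
    _ ≤ k * #(D \ C) + k * k := by gcongr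
    _ = k * (#(D \ C) + k) := (mul_add _ _ _).symm

theorem card_addStab_le_or_card_addStab_le (hDC : ¬D ⊆ C) (hle : #(addStab C) ≤ #(addStab D)) :
    #(addStab C) ≤ #(D \ C) + #(addStab C ∩ addStab D) ∨
      #(addStab D) ≤ #(C \ D) + #(addStab C ∩ addStab D) := by
  obtain rfl | hC := C.eq_empty_or_nonempty
  · simp [addStab]
  obtain ⟨x, hxD, hxC⟩ := not_subset.1 hDC
  have hself {s : Finset G} (hs : s.Nonempty) : x ∈ x +ᵥ addStab s :=
    mem_vadd_finset.2 ⟨0, zero_mem_addStab hs, add_zero x⟩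
  have hinter : (D ∩ (x +ᵥ addStab C)).Nonempty := ⟨x, mem_inter.2 ⟨hxD, hself hC⟩⟩
  have hsdiff : ((x +ᵥ addStab D) \ C).Nonempty := ⟨x, mem_sdiff.2 ⟨hself ⟨x, hxD⟩, hxC⟩⟩
  have hsumDC := card_inter_coset_add_card_coset_sdiff_le hinter hsdiff
  have hcosetC : #(D ∩ (x +ᵥ addStab C)) + #((x +ᵥ addStab C) \ D) = #(addStab C) := by
    rw [inter_comm, card_inter_add_card_sdiff, card_vadd_finset]
  have hcosetD : #(C ∩ (x +ᵥ addStab D)) + #((x +ᵥ addStab D) \ C) = #(addStab D) := by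
    rw [inter_comm, card_inter_add_card_sdiff, card_vadd_finset]
  rcases ((x +ᵥ addStab C) \ D).eq_empty_or_nonempty with hempty | hsdiff'
  · rw [hempty, card_empty] at hcosetC
    omega
  rcases (C ∩ (x +ᵥ addStab D)).eq_empty_or_nonempty with hempty | hinter'
  · rw [hempty, card_empty] at hcosetD
    omega
  have hsumCD := card_inter_coset_add_card_coset_sdiff_le hinter' hsdiff'
  rw [inter_comm (addStab D)] at hsumCD
  omega

theorem le_card_union_add_card_addStab_union {n : ℕ} (hC : n ≤ #C + #(addStab C))
    (hD : n ≤ #D + #(addStab D)) : n ≤ #(C ∪ D) + #(addStab (C ∪ D)) := by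
  wlog hle : #(addStab C) ≤ #(addStab D) generalizing C D
  · rw [union_comm]
    exact this hD hC (le_of_not_ge hle)
  by_cases hDC : D ⊆ C
  · rwa [union_eq_left.2 hDC]
  have hstab := card_le_card (addStab_inter_addStab_subset_addStab_union (s := C) (t := D))
  have hunionC : #(D \ C) + #C = #(C ∪ D) := by rw [card_sdiff_add_card, union_comm]
  have hunionD : #(C \ D) + #D = #(C ∪ D) := card_sdiff_add_card C D
  have hgrid := card_addStab_le_or_card_addStab_le hDC hle
  omega

end Union

section Kneser

variable {G : Type*} [AddCommGroup G] [DecidableEq G] {A B : Finset G} {a b : G}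

theorem card_le_card_addStab_of_subset_neg_vadd (hA : A.Nonempty)
    (hAB : ∀ e ∈ A, B ⊆ -(e - b) +ᵥ A) : #B ≤ #(addStab A) := by
  rw [← card_vadd_finset (-b)]
  refine card_le_card fun z hz ↦ ?_
  obtain ⟨y, hy, rfl⟩ := mem_vadd_finset.1 hz
  rw [mem_addStab hA, mem_stabilizer_finset']
  intro e he
  have hmem : (e - b) + y ∈ A := mem_neg_vadd_finset_iff.1 (hAB e he hy)
  rwa [show (e - b) + y = (-b +ᵥ y) +ᵥ e by simp only [vadd_eq_add]; abel] at hmem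

theorem exists_subset_add_le_card_add_card_addStab (ha : a ∈ A) (hb : b ∈ B) :
    ∃ C ⊆ A + B, a + b ∈ C ∧ #A + #B ≤ #C + #(addStab C) := by
  induction B using Finset.strongInduction generalizing A with
  | H B ih =>
  by_cases hAB : ∀ e ∈ A, B ⊆ -(e - b) +ᵥ A
  · refine ⟨A + {b}, add_subset_add_left (singleton_subset_iff.2 hb),
      add_mem_add ha (mem_singleton_self b), ?_⟩
    rw [card_add_singleton, addStab_add_singleton]
    exact Nat.add_le_add_left (card_le_card_addStab_of_subset_neg_vadd ⟨a, ha⟩ hAB) _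
  · push Not at hAB
    obtain ⟨e, he, heB⟩ := hAB
    have hss : B ∩ (-(e - b) +ᵥ A) ⊂ B := inf_lt_left.2 heB
    have hbB : b ∈ B ∩ (-(e - b) +ᵥ A) :=
      mem_inter.2 ⟨hb, mem_neg_vadd_finset_iff.2 (by rwa [vadd_eq_add, sub_add_cancel])⟩
    obtain ⟨C, hC, habC, hcard⟩ := ih _ hss (mem_union_left _ ha) hbB
    exact ⟨C, hC.trans (addDysonETransform.subset _ (A, B)), habC,
      (addDysonETransform.card _ (A, B)).symm.trans_le hcard⟩

end Kneser

theorem kneser_general {G : Type*} [AddCommGroup G] [DecidableEq G] {A B : Finset G}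
    (hA : A.Nonempty) (hB : B.Nonempty) :
    #A + #B ≤ #(A + B) + Nat.card (stabilizer G (A + B)) := by
  rw [← card_addStab (hA.add hB)]
  let admissible : Finset (Finset G) := {C ∈ (A + B).powerset | #A + #B ≤ #C + #(addStab C)}
  have hadm : ∀ z ∈ A + B, ∃ C ∈ admissible, z ∈ C := by
    intro z hz
    obtain ⟨a, ha, b, hb, rfl⟩ := mem_add.1 hz
    obtain ⟨C, hC, habC, hcard⟩ := exists_subset_add_le_card_add_card_addStab ha hb
    exact ⟨C, mem_filter.2 ⟨mem_powerset.2 hC, hcard⟩, habC⟩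
  obtain ⟨z, hz⟩ := hA.add hB
  obtain ⟨C₀, hC₀, -⟩ := hadm z hz
  obtain ⟨M, hM⟩ := admissible.exists_maximal ⟨C₀, hC₀⟩
  obtain ⟨hMsub, hMcard⟩ := mem_filter.1 hM.prop
  have hsub : A + B ⊆ M := by
    intro z hz
    obtain ⟨C, hC, hzC⟩ := hadm z hz
    obtain ⟨hCsub, hCcard⟩ := mem_filter.1 hC
    have hunion : M ∪ C ∈ admissible := mem_filter.2
      ⟨mem_powerset.2 (union_subset (mem_powerset.1 hMsub) (mem_powerset.1 hCsub)),
        le_card_union_add_card_addStab_union hMcard hCcard⟩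
    exact hM.le_of_ge hunion subset_union_left (mem_union_right _ hzC)
  rwa [(mem_powerset.1 hMsub).antisymm hsub] at hMcard

theorem card_symGroup {m : ℕ} [NeZero m] (A : Finset (ZMod m)) :
    #(symGroup A) = Nat.card (stabilizer (ZMod m) A) := by
  rw [← Set.ncard_coe_finset, ← Nat.card_coe_set_eq]
  refine Nat.card_congr (Equiv.subtypeEquivRight fun h ↦ ?_)
  rw [mem_coe, symGroup, mem_filter_univ, mem_stabilizer_iff, add_comm, ← vadd_eq_add,
    singleton_vadd]

/-- Kneser's Theorem: for non-empty `A, B ⊆ ℤ_m`,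
`|A+B| ≥ min(|A| + |B| - |Sym(A+B)|, m)`. -/
theorem kneser (m : ℕ) [NeZero m] (A B : Finset (ZMod m))
    (hA : A.Nonempty) (hB : B.Nonempty) :
    min ((A.card : ℤ) + (B.card : ℤ) - ((symGroup (A + B)).card : ℤ)) (m : ℤ)
      ≤ ((A + B).card : ℤ) := by
  have hcard := kneser_general hA hB
  rw [← card_symGroup] at hcard
  omega
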